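/- Let A be a ring such that the finitely presented right A-modules form an abelian category, and let χ be a subadditive function on the finitely presented A-modules. Then there exists an endofinite A-module M such that Adloc(χ) = Adloc(χ_M). -/

import Mathlib

/-- The composition length of a module (the length of a composition series,
zero if none exists). -/
noncomputable def compLength (R : Type) [Ring R] (M : Type) [AddCommGroup M] [Module R M] : ℕ := by
  classical
  exact if h : ∃ s : CompositionSeries (Submodule R M), s.head = ⊥ ∧ s.last = ⊤ then
    h.choose.length else 0

/-- A module `M` is endofinite if it has finite composition length over its
endomorphism ring, which acts on `M` by application. -/
def IsEndofinite (A : Type) [Ring A] (M : Type) [AddCommGroup M] [Module A M] : Prop :=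
  IsFiniteLength (Module.End A M) M

/-- The subadditive function `χ_M` associated to a module `M`:
`χ_M(X) = ℓ_{End_A(M)} Hom_A(X, M)`, where `End_A(M)` acts by postcomposition. -/
noncomputable def chiMod (A : Type) [Ring A] (M : Type) [AddCommGroup M] [Module A M]
    (X : Type) [AddCommGroup X] [Module A X] : ℕ :=
  compLength (Module.End A M) (X →ₗ[A] M)

/-- A subadditive function on the finitely presented `A`-modules: it depends only on
the isomorphism class, is additive on direct sums, and satisfies
`χ(X) + χ(Z) ≥ χ(Y)` for every exact sequence `X → Y → Z → 0`. -/
def IsSubadditive (A : Type) [Ring A]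
    (χ : (X : Type) → [AddCommGroup X] → [Module A X] → ℕ) : Prop :=
  (∀ (X Y : Type) [AddCommGroup X] [Module A X] [AddCommGroup Y] [Module A Y],
      Module.FinitePresentation A X → Module.FinitePresentation A Y →
      (X ≃ₗ[A] Y) → χ X = χ Y) ∧
  (∀ (X Y : Type) [AddCommGroup X] [Module A X] [AddCommGroup Y] [Module A Y],
      Module.FinitePresentation A X → Module.FinitePresentation A Y →
      χ (X × Y) = χ X + χ Y) ∧
  (∀ (X Y Z : Type) [AddCommGroup X] [Module A X] [AddCommGroup Y] [Module A Y]
      [AddCommGroup Z] [Module A Z],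
      Module.FinitePresentation A X → Module.FinitePresentation A Y →
      Module.FinitePresentation A Z →
      ∀ (f : X →ₗ[A] Y) (g : Y →ₗ[A] Z),
      Function.Exact f g → Function.Surjective g → χ Y ≤ χ X + χ Z)

/-- Membership in the additive locus `Adloc(χ)`: `Z` is finitely presented and
`χ(X) - χ(Y) + χ(Z) = 0` for every short exact sequence `0 → X → Y → Z → 0` of
finitely presented modules. -/
def MemAdloc (A : Type) [Ring A]
    (χ : (X : Type) → [AddCommGroup X] → [Module A X] → ℕ)
    (Z : Type) [AddCommGroup Z] [Module A Z] : Prop :=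
  Module.FinitePresentation A Z ∧
  ∀ (X Y : Type) [AddCommGroup X] [Module A X] [AddCommGroup Y] [Module A Y],
    Module.FinitePresentation A X → Module.FinitePresentation A Y →
    ∀ (f : X →ₗ[A] Y) (g : Y →ₗ[A] Z),
    Function.Injective f → Function.Exact f g → Function.Surjective g →
    χ X + χ Z = χ Y

/-- The hypothesis that the finitely presented `A`-modules form an abelian category:
kernels of maps between finitely presented modules are finitely presented. -/
def FpAbelian (A : Type) [Ring A] : Prop :=
  ∀ (X Y : Type) [AddCommGroup X] [Module A X] [AddCommGroup Y] [Module A Y],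
    Module.FinitePresentation A X → Module.FinitePresentation A Y →
    ∀ f : X →ₗ[A] Y, Module.FinitePresentation A (LinearMap.ker f)

/-!
Call a map `f : X → Y` of finitely presented modules additive if `χ X + χ (coker f) = χ Y`.
Additive maps are closed under composition and pushout, and `f` is additive as soon as some `g ∘ f`
is, so a countable small object argument yields a module `M` such that `Hom(f, M)` is surjective
exactly when `f` is additive.

For `y` in a finitely presented module `Y`, the number `χ Y - χ (Y / A y)` is at most `χ A`. The
injectivity property of `M` makes the induced rank strictly monotone on the pp-definable subgroups
of `M`, so these satisfy both chain conditions. Then every `End M`-submodule of `M` is pp-definable,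
and `M` is endofinite.

Finally, for `X → Y → Z → 0` exact with first map `f`, the functor `Hom(-, M)` is left exact, so
`χ_M` is additive on the sequence if and only if `Hom(f, M)` is surjective, if and only if `χ` is.
-/

section LinearAlgebra

variable {A : Type*} [Ring A] {X Y Z W : Type*} [AddCommGroup X] [Module A X]
  [AddCommGroup Y] [Module A Y] [AddCommGroup Z] [Module A Z] [AddCommGroup W] [Module A W]

theorem exists_comp_eq_of_ker_le_ker {π : X →ₗ[A] Y} (hπ : Function.Surjective π)
    {g : X →ₗ[A] Z} (h : LinearMap.ker π ≤ LinearMap.ker g) : ∃ g' : Y →ₗ[A] Z, g' ∘ₗ π = g := by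
  refine ⟨(LinearMap.ker π).liftQ g h ∘ₗ (π.quotKerEquivOfSurjective hπ).symm.toLinearMap, ?_⟩
  ext x
  simp [LinearMap.quotKerEquivOfSurjective_symm_apply]

theorem finitePresentation_quotient [Module.FinitePresentation A Y] {N : Submodule A Y}
    (hN : N.FG) : Module.FinitePresentation A (Y ⧸ N) :=
  Module.finitePresentation_of_surjective N.mkQ N.mkQ_surjective (by rwa [Submodule.ker_mkQ])

instance finitePresentation_quotient_range [Module.Finite A X] [Module.FinitePresentation A Y]
    (f : X →ₗ[A] Y) : Module.FinitePresentation A (Y ⧸ LinearMap.range f) :=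
  finitePresentation_quotient (by
    rw [LinearMap.range_eq_map]
    exact Module.Finite.fg_top.map f)

theorem exists_fg_le_map_eq {p : X →ₗ[A] Y} {L : Submodule A X} {K : Submodule A Y}
    (hK : K.FG) (hKL : K ≤ L.map p) : ∃ N ≤ L, N.FG ∧ N.map p = K := by
  classical
  obtain ⟨t, rfl⟩ := hK
  have ht : (t : Set Y) ⊆ p '' L := Submodule.span_le.1 hKL
  obtain ⟨s, hs, rfl⟩ := Finset.subset_set_image_iff.1 ht
  exact ⟨Submodule.span A s, Submodule.span_le.2 hs, ⟨s, rfl⟩, by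
    rw [Submodule.map_span, Finset.coe_image]⟩

theorem exact_mkQ_range (f : X →ₗ[A] Y) : Function.Exact f (LinearMap.range f).mkQ :=
  LinearMap.exact_iff.2 (Submodule.ker_mkQ _)

/-- The map `coker f → coker (g ∘ f)` induced by `g`. -/
def cokernelMap (f : X →ₗ[A] Y) (g : Y →ₗ[A] W) :
    (Y ⧸ LinearMap.range f) →ₗ[A] W ⧸ LinearMap.range (g ∘ₗ f) :=
  Submodule.mapQ _ _ g <| by
    rintro _ ⟨x, rfl⟩
    exact ⟨x, rfl⟩

theorem exact_prod_coprod_cokernelMap (f : X →ₗ[A] Y) (g : Y →ₗ[A] W) :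
    Function.Exact (g.prod (LinearMap.range f).mkQ)
      ((LinearMap.range (g ∘ₗ f)).mkQ.coprod (-cokernelMap f g)) := by
  rintro ⟨w, y⟩
  obtain ⟨y, rfl⟩ := Submodule.mkQ_surjective _ y
  constructor
  · intro hwy
    obtain ⟨x, hx⟩ : w - g y ∈ LinearMap.range (g ∘ₗ f) := by
      rw [← Submodule.Quotient.mk_eq_zero, Submodule.Quotient.mk_sub, sub_eq_add_neg]
      simpa [cokernelMap] using hwy
    refine ⟨y + f x, Prod.ext ?_ (by simp)⟩
    simpa [sub_eq_iff_eq_add'] using hx.symm ▸ (add_sub_cancel (g y) w)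
  · rintro ⟨y', hy'⟩
    rw [← hy']
    simp [cokernelMap]

theorem surjective_mkQ_coprod (N : Submodule A W) (g : Z →ₗ[A] W ⧸ N) :
    Function.Surjective (N.mkQ.coprod g) := by
  intro w
  obtain ⟨w, rfl⟩ := N.mkQ_surjective w
  exact ⟨(w, 0), by simp⟩

theorem exact_cokernelMap_factor (f : X →ₗ[A] Y) (g : Y →ₗ[A] W) :
    Function.Exact (cokernelMap f g) (Submodule.factor (LinearMap.range_comp_le_range f g)) := by
  intro w
  obtain ⟨w, rfl⟩ := Submodule.mkQ_surjective _ w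
  constructor
  · intro hw
    obtain ⟨y, rfl⟩ : w ∈ LinearMap.range g := by simpa using hw
    exact ⟨Submodule.Quotient.mk y, by simp [cokernelMap]⟩
  · rintro ⟨y, hy⟩
    obtain ⟨y, rfl⟩ := Submodule.mkQ_surjective _ y
    simp [← hy, cokernelMap]

/-- The pushout `(W × Y) / {(a x, -f x)}` of the linear maps `a : X → W` and `f : X → Y`. -/
abbrev LinearPushout (a : X →ₗ[A] W) (f : X →ₗ[A] Y) : Type _ :=
  (W × Y) ⧸ LinearMap.range (a.prod (-f))

namespace LinearPushout

variable (a : X →ₗ[A] W) (f : X →ₗ[A] Y)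

/-- The coprojection of `W` to the pushout. -/
def inl : W →ₗ[A] LinearPushout a f := Submodule.mkQ _ ∘ₗ LinearMap.inl A W Y

/-- The coprojection of `Y` to the pushout. -/
def inr : Y →ₗ[A] LinearPushout a f := Submodule.mkQ _ ∘ₗ LinearMap.inr A W Y

theorem inl_add_inr (p : W × Y) : inl a f p.1 + inr a f p.2 = Submodule.Quotient.mk p := by
  simp [inl, inr, ← Submodule.Quotient.mk_add]

theorem exists_inl_add_inr (p : LinearPushout a f) : ∃ w y, inl a f w + inr a f y = p := by
  obtain ⟨p, rfl⟩ := Submodule.mkQ_surjective _ p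
  exact ⟨p.1, p.2, inl_add_inr a f p⟩

theorem condition : inl a f ∘ₗ a = inr a f ∘ₗ f := by
  ext x
  rw [LinearMap.comp_apply, LinearMap.comp_apply, ← sub_eq_zero, sub_eq_add_neg, ← map_neg,
    inl_add_inr a f (a x, -f x), Submodule.Quotient.mk_eq_zero]
  exact ⟨x, rfl⟩

variable {a f}

theorem exists_desc {p : W →ₗ[A] Z} {q : Y →ₗ[A] Z} (h : p ∘ₗ a = q ∘ₗ f) :
    ∃ d : LinearPushout a f →ₗ[A] Z, d ∘ₗ inl a f = p ∧ d ∘ₗ inr a f = q := by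
  have hle : LinearMap.range (a.prod (-f)) ≤ LinearMap.ker (p.coprod q) := by
    rintro _ ⟨x, rfl⟩
    simpa [← sub_eq_add_neg, sub_eq_zero] using LinearMap.congr_fun h x
  exact ⟨Submodule.liftQ _ (p.coprod q) hle, by ext; simp [inl], by ext; simp [inr]⟩

variable (a f)

theorem exists_cokernel :
    ∃ g : LinearPushout a f →ₗ[A] Y ⧸ LinearMap.range f,
      Function.Exact (inl a f) g ∧ Function.Surjective g := by
  obtain ⟨g, hgl, hgr⟩ := exists_desc (a := a) (f := f) (p := 0) (q := (LinearMap.range f).mkQ)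
    (by rw [LinearMap.range_mkQ_comp, LinearMap.zero_comp])
  have hg (w : W) (y : Y) : g (inl a f w + inr a f y) = Submodule.Quotient.mk y := by
    rw [map_add]
    simpa using congr($(LinearMap.congr_fun hgl w) + $(LinearMap.congr_fun hgr y))
  refine ⟨g, fun p => ?_, fun z => ?_⟩
  · obtain ⟨w, y, rfl⟩ := exists_inl_add_inr a f p
    rw [hg, Submodule.Quotient.mk_eq_zero]
    constructor
    · rintro ⟨x, rfl⟩
      exact ⟨w + a x, by
        simpa using LinearMap.congr_fun (condition a f) x⟩
    · rintro ⟨w', hw'⟩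
      rw [← Submodule.Quotient.mk_eq_zero, ← hg w y, ← hw']
      simpa using hg w' 0
  · obtain ⟨y, rfl⟩ := Submodule.mkQ_surjective _ z
    exact ⟨inr a f y, LinearMap.congr_fun hgr y⟩

end LinearPushout

end LinearAlgebra

section Subadditive

variable {A : Type} [Ring A] {χ : (X : Type) → [AddCommGroup X] → [Module A X] → ℕ}
  {X Y Z W : Type} [AddCommGroup X] [Module A X] [AddCommGroup Y] [Module A Y]
  [AddCommGroup Z] [Module A Z] [AddCommGroup W] [Module A W]

/-- `χ` is additive along `f : X → Y` if equality holds in the subadditivity inequality of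
`X → Y → coker f → 0`. Such an `f` need not be injective. -/
def AdditiveAt (χ : (X : Type) → [AddCommGroup X] → [Module A X] → ℕ) (f : X →ₗ[A] Y) : Prop :=
  χ X + χ (Y ⧸ LinearMap.range f) = χ Y

/-- The part `χ(Y) - χ(coker f)` of `χ(Y)` that is accounted for by the image of `f : X → Y`.
For subadditive `χ` this difference is not truncated. -/
def chiRank (χ : (X : Type) → [AddCommGroup X] → [Module A X] → ℕ) (f : X →ₗ[A] Y) : ℕ :=
  χ Y - χ (Y ⧸ LinearMap.range f)

namespace IsSubadditive

variable (hχ : IsSubadditive A χ)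
include hχ

theorem congr [Module.FinitePresentation A X] (e : X ≃ₗ[A] Y) : χ X = χ Y :=
  hχ.1 X Y ‹_› (Module.FinitePresentation.of_equiv e) e

theorem prod [Module.FinitePresentation A X] [Module.FinitePresentation A Y] :
    χ (X × Y) = χ X + χ Y :=
  hχ.2.1 X Y ‹_› ‹_›

theorem le_of_exact [Module.FinitePresentation A X] [Module.FinitePresentation A Y]
    {f : X →ₗ[A] Y} {g : Y →ₗ[A] Z} (hfg : Function.Exact f g) (hg : Function.Surjective g) :
    χ Y ≤ χ X + χ Z := by
  have : Module.FinitePresentation A Z := Module.FinitePresentation.of_equiv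
    (hfg.linearEquivOfSurjective hg)
  exact hχ.2.2 X Y Z ‹_› ‹_› this f g hfg hg

theorem eq_zero [Subsingleton X] : χ X = 0 := by
  have h : χ (X × X) = χ X := hχ.congr (LinearEquiv.ofSubsingleton (X × X) X)
  rw [hχ.prod] at h
  omega

theorem le_add_cokernel [Module.FinitePresentation A X] [Module.FinitePresentation A Y]
    (f : X →ₗ[A] Y) : χ Y ≤ χ X + χ (Y ⧸ LinearMap.range f) :=
  hχ.le_of_exact (exact_mkQ_range f) (Submodule.mkQ_surjective _)

theorem le_of_surjective [Module.FinitePresentation A X] [Module.FinitePresentation A Y]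
    {f : X →ₗ[A] Y} (hf : Function.Surjective f) : χ Y ≤ χ X := by
  have h0 : Function.Exact f (0 : Y →ₗ[A] PUnit) := fun y => by simpa using hf y
  simpa [hχ.eq_zero] using hχ.le_of_exact h0 fun z => ⟨0, rfl⟩

theorem additiveAt_iff_of_exact [Module.Finite A X] [Module.FinitePresentation A Y]
    {f : X →ₗ[A] Y} {g : Y →ₗ[A] Z} (hfg : Function.Exact f g) (hg : Function.Surjective g) :
    AdditiveAt χ f ↔ χ X + χ Z = χ Y := by
  rw [AdditiveAt, hχ.congr (hfg.linearEquivOfSurjective hg)]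

theorem additiveAt_equiv [Module.FinitePresentation A X] (e : X ≃ₗ[A] Y) :
    AdditiveAt χ e.toLinearMap := by
  have := Module.FinitePresentation.of_equiv e
  have h0 : Function.Exact e.toLinearMap (0 : Y →ₗ[A] PUnit) := fun y => by
    simp
  rw [hχ.additiveAt_iff_of_exact h0 fun z => ⟨0, rfl⟩, hχ.eq_zero (X := PUnit), add_zero,
    hχ.congr e]

theorem additiveAt_comp [Module.FinitePresentation A X] [Module.FinitePresentation A Y]
    [Module.FinitePresentation A W] {f : X →ₗ[A] Y} {g : Y →ₗ[A] W} (hf : AdditiveAt χ f)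
    (hg : AdditiveAt χ g) : AdditiveAt χ (g ∘ₗ f) := by
  have h₁ := hχ.le_of_exact (exact_cokernelMap_factor f g) (Submodule.factor_surjective _)
  have h₂ := hχ.le_add_cokernel (g ∘ₗ f)
  unfold AdditiveAt at *
  omega

theorem chi_add_cokernel_le [Module.Finite A X] [Module.FinitePresentation A Y]
    [Module.FinitePresentation A W] (f : X →ₗ[A] Y) (g : Y →ₗ[A] W) :
    χ W + χ (Y ⧸ LinearMap.range f) ≤ χ Y + χ (W ⧸ LinearMap.range (g ∘ₗ f)) := by
  rw [← hχ.prod]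
  exact hχ.le_of_exact (exact_prod_coprod_cokernelMap f g) (surjective_mkQ_coprod _ _)

theorem additiveAt_of_comp [Module.FinitePresentation A X] [Module.FinitePresentation A Y]
    [Module.FinitePresentation A W] {f : X →ₗ[A] Y} {g : Y →ₗ[A] W}
    (hgf : AdditiveAt χ (g ∘ₗ f)) : AdditiveAt χ f := by
  have h₁ := hχ.chi_add_cokernel_le f g
  have h₂ := hχ.le_add_cokernel f
  unfold AdditiveAt at *
  omega

theorem additiveAt_pushout_inl [Module.FinitePresentation A X] [Module.FinitePresentation A Y]
    [Module.FinitePresentation A W] {f : X →ₗ[A] Y} (hf : AdditiveAt χ f) (a : X →ₗ[A] W) :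
    AdditiveAt χ (LinearPushout.inl a f) := by
  obtain ⟨g, hg, hg'⟩ := LinearPushout.exists_cokernel a f
  have h₁ : χ (W × Y) ≤ χ X + χ (LinearPushout a f) := hχ.le_add_cokernel _
  have h₂ := hχ.le_of_exact hg hg'
  rw [hχ.prod] at h₁
  rw [hχ.additiveAt_iff_of_exact hg hg']
  unfold AdditiveAt at hf
  omega

theorem chiRank_le [Module.FinitePresentation A X] [Module.FinitePresentation A Y]
    (f : X →ₗ[A] Y) : chiRank χ f ≤ χ X := by
  have h := hχ.le_add_cokernel f
  unfold chiRank
  omega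

theorem additiveAt_prod_mkQ_of_chiRank_le [Module.Finite A X] [Module.FinitePresentation A Y]
    [Module.FinitePresentation A W] {f : X →ₗ[A] Y} {g : Y →ₗ[A] W}
    (hfg : chiRank χ f ≤ chiRank χ (g ∘ₗ f)) :
    AdditiveAt χ (g.prod (LinearMap.range f).mkQ) := by
  have h₁ := hχ.chi_add_cokernel_le f g
  have h₂ := hχ.le_of_surjective (LinearMap.range f).mkQ_surjective
  have h₃ := hχ.le_of_surjective (LinearMap.range (g ∘ₗ f)).mkQ_surjective
  rw [hχ.additiveAt_iff_of_exact (exact_prod_coprod_cokernelMap f g)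
    (surjective_mkQ_coprod _ _), hχ.prod]
  unfold chiRank at hfg
  omega

end IsSubadditive

end Subadditive

section Pushout

universe u

variable {A : Type u} [Ring A]

theorem exists_surjective_lift {X₀ V P : Type*} [AddCommGroup X₀] [Module A X₀] [AddCommGroup V]
    [Module A V] [AddCommGroup P] [Module A P] [Module.Finite A V] {R : Submodule A P}
    {v : X₀ →ₗ[A] V} {u : X₀ →ₗ[A] P} {b : V →ₗ[A] P ⧸ R} (hbv : b ∘ₗ v = R.mkQ ∘ₗ u) :
    ∃ (n : ℕ) (π : X₀ × (Fin n → A) →ₗ[A] V) (ψ : X₀ × (Fin n → A) →ₗ[A] P),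
      Function.Surjective π ∧ (∀ x, π (x, 0) = v x) ∧ (∀ x, ψ (x, 0) = u x) ∧
        R.mkQ ∘ₗ ψ = b ∘ₗ π := by
  obtain ⟨n, p, hp⟩ := Module.Finite.exists_fin' A V
  obtain ⟨φ, hφ⟩ := Module.projective_lifting_property R.mkQ (b ∘ₗ p) R.mkQ_surjective
  refine ⟨n, v.coprod p, u.coprod φ, fun z => ?_, fun x => by simp, fun x => by simp, ?_⟩
  · obtain ⟨r, rfl⟩ := hp z
    exact ⟨(0, r), by simp⟩
  · rw [LinearMap.comp_coprod, LinearMap.comp_coprod, hφ, hbv]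

theorem exists_finitePresentation_comp_pushout_inl {X₀ X : Type u} {Y V W : Type*}
    [AddCommGroup X₀] [Module A X₀] [AddCommGroup X] [Module A X] [AddCommGroup Y] [Module A Y]
    [AddCommGroup V] [Module A V] [AddCommGroup W] [Module A W]
    [Module.FinitePresentation A X₀] [Module.FinitePresentation A X]
    [Module.FinitePresentation A V] {u : X₀ →ₗ[A] W} {a : X →ₗ[A] W} {f : X →ₗ[A] Y}
    {v : X₀ →ₗ[A] V} {b : V →ₗ[A] LinearPushout a f}
    (hbv : b ∘ₗ v = LinearPushout.inl a f ∘ₗ u) :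
    ∃ (W₁ : Type u) (_ : AddCommGroup W₁) (_ : Module A W₁) (_ : Module.FinitePresentation A W₁)
      (t : W₁ →ₗ[A] W) (u₁ : X₀ →ₗ[A] W₁) (a₁ : X →ₗ[A] W₁) (c : V →ₗ[A] LinearPushout a₁ f),
      t ∘ₗ u₁ = u ∧ c ∘ₗ v = LinearPushout.inl a₁ f ∘ₗ u₁ := by
  obtain ⟨n, π, ψ, hπ, hπv, hψu, hψ⟩ :=
    exists_surjective_lift (R := LinearMap.range (a.prod (-f))) (u := LinearMap.inl A W Y ∘ₗ u) hbv
  let L : Submodule A ((X₀ × (Fin n → A)) × X) := LinearMap.ker (ψ.coprod (a.prod (-f)))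
  have hL : LinearMap.ker π ≤ L.map (LinearMap.fst A _ _) := fun q hq => by
    obtain ⟨x, hx⟩ : ψ q ∈ LinearMap.range (a.prod (-f)) := by
      rw [← Submodule.Quotient.mk_eq_zero]
      simpa [LinearMap.mem_ker.1 hq] using LinearMap.congr_fun hψ q
    refine ⟨(q, -x), LinearMap.mem_ker.2 ?_, rfl⟩
    rw [LinearMap.coprod_apply, map_neg, hx, add_neg_cancel]
  obtain ⟨N, hNL, hN, hNπ⟩ := exists_fg_le_map_eq (Module.FinitePresentation.fg_ker π hπ) hL
  let i := N.mkQ ∘ₗ LinearMap.inl A _ X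
  let a₁ := N.mkQ ∘ₗ LinearMap.inr A _ X
  have hker : LinearMap.ker π ≤ LinearMap.ker (LinearPushout.inl a₁ f ∘ₗ i +
      LinearPushout.inr a₁ f ∘ₗ LinearMap.snd A W Y ∘ₗ ψ) := by
    rw [← hNπ]
    rintro _ ⟨⟨q, x⟩, hqx, rfl⟩
    have hiq : i q = -a₁ x := by
      rw [eq_neg_iff_add_eq_zero]
      simpa [i, a₁, ← Submodule.Quotient.mk_add] using hqx
    have hψq : (ψ q).2 = f x := by
      simpa [L, ← sub_eq_add_neg, sub_eq_zero] using congr(Prod.snd $(hNL hqx))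
    have hx := LinearMap.congr_fun (LinearPushout.condition a₁ f) x
    simp_all
  obtain ⟨c, hc⟩ := exists_comp_eq_of_ker_le_ker hπ hker
  have ht : N ≤ LinearMap.ker ((LinearMap.fst A W Y ∘ₗ ψ).coprod a) :=
    fun q hq => congr(Prod.fst $(hNL hq))
  refine ⟨_ ⧸ N, inferInstance, inferInstance, finitePresentation_quotient hN,
    N.liftQ _ ht, i ∘ₗ LinearMap.inl A X₀ _, a₁, c, ?_, ?_⟩
  · ext x
    simp [i, hψu]
  · ext x
    simpa [hπv, hψu] using LinearMap.congr_fun hc (x, 0)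

end Pushout

/-- `M` is injective relative to `f : X → Y`: every map `X → M` extends along `f`. -/
def ExtendsAlong {A X Y : Type*} (M : Type*) [Ring A] [AddCommGroup X] [Module A X]
    [AddCommGroup Y] [Module A Y] [AddCommGroup M] [Module A M] (f : X →ₗ[A] Y) : Prop :=
  ∀ a : X →ₗ[A] M, ∃ b : Y →ₗ[A] M, b ∘ₗ f = a

section RelativeInjectivity

variable {A : Type} [Ring A] (χ : (X : Type) → [AddCommGroup X] → [Module A X] → ℕ)

/-- `M` is injective relative to all maps of finitely presented modules along which `χ` is
additive. -/
def IsAdditiveInjective (M : Type) [AddCommGroup M] [Module A M] : Prop :=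
  ∀ (X Y : Type) [AddCommGroup X] [Module A X] [AddCommGroup Y] [Module A Y],
    Module.FinitePresentation A X → Module.FinitePresentation A Y →
    ∀ f : X →ₗ[A] Y, AdditiveAt χ f → ExtendsAlong M f

/-- A map `u : X → W` to an arbitrary module such that `χ` is additive along `v` whenever
`X → V → W` is a factorization of `u` through a finitely presented module. This is how
additivity of `χ` along `u` is expressed when `χ(W)` makes no sense. -/
def IsLocallyAdditive {X W : Type} [AddCommGroup X] [Module A X] [AddCommGroup W] [Module A W]
    (u : X →ₗ[A] W) : Prop :=
  ∀ (V : Type) [AddCommGroup V] [Module A V], Module.FinitePresentation A V →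
    ∀ (v : X →ₗ[A] V) (b : V →ₗ[A] W), b ∘ₗ v = u → AdditiveAt χ v

variable {χ} {X₀ W W' : Type} [AddCommGroup X₀] [Module A X₀] [AddCommGroup W] [Module A W]
  [AddCommGroup W'] [Module A W']

theorem IsLocallyAdditive.of_comp {u : X₀ →ₗ[A] W} {t : W →ₗ[A] W'}
    (h : IsLocallyAdditive χ (t ∘ₗ u)) : IsLocallyAdditive χ u :=
  fun V _ _ hV v b hbv => h V hV v (t ∘ₗ b) (by rw [LinearMap.comp_assoc, hbv])

variable (hχ : IsSubadditive A χ) [Module.FinitePresentation A X₀]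
include hχ

theorem isLocallyAdditive_id : IsLocallyAdditive χ (LinearMap.id : X₀ →ₗ[A] X₀) := by
  intro V _ _ _ v b hbv
  refine hχ.additiveAt_of_comp (g := b) ?_
  rw [hbv]
  exact hχ.additiveAt_equiv (LinearEquiv.refl A X₀)

theorem IsLocallyAdditive.pushout_inl {X Y : Type} [AddCommGroup X] [Module A X]
    [AddCommGroup Y] [Module A Y] [Module.FinitePresentation A X] [Module.FinitePresentation A Y]
    {u : X₀ →ₗ[A] W} (hu : IsLocallyAdditive χ u) {f : X →ₗ[A] Y} (hf : AdditiveAt χ f)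
    (a : X →ₗ[A] W) : IsLocallyAdditive χ (LinearPushout.inl a f ∘ₗ u) := by
  intro V _ _ _ v b hbv
  obtain ⟨W₁, _, _, hW₁, t, u₁, a₁, c, htu, hcv⟩ :=
    exists_finitePresentation_comp_pushout_inl hbv
  have hu₁ : AdditiveAt χ u₁ := hu W₁ hW₁ u₁ t htu
  refine hχ.additiveAt_of_comp (g := c) ?_
  rw [hcv]
  exact hχ.additiveAt_comp hu₁ (hχ.additiveAt_pushout_inl hf a₁)

theorem IsLocallyAdditive.exists_extend_finset {J : Type} {X Y : J → Type}
    [∀ j, AddCommGroup (X j)] [∀ j, Module A (X j)] [∀ j, AddCommGroup (Y j)]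
    [∀ j, Module A (Y j)] [∀ j, Module.FinitePresentation A (X j)]
    [∀ j, Module.FinitePresentation A (Y j)] {u : X₀ →ₗ[A] W} (hu : IsLocallyAdditive χ u)
    {f : ∀ j, X j →ₗ[A] Y j} (hf : ∀ j, AdditiveAt χ (f j)) (a : ∀ j, X j →ₗ[A] W)
    (F : Finset J) :
    ∃ (W' : Type) (_ : AddCommGroup W') (_ : Module A W') (t : W →ₗ[A] W')
      (y : ∀ j, Y j →ₗ[A] W'),
      (∀ j ∈ F, y j ∘ₗ f j = t ∘ₗ a j) ∧ IsLocallyAdditive χ (t ∘ₗ u) := by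
  classical
  induction F using Finset.induction_on with
  | empty => exact ⟨W, _, _, LinearMap.id, 0, by simp, hu⟩
  | insert j F _ ih =>
    obtain ⟨W', _, _, t, y, hy, ht⟩ := ih
    refine ⟨LinearPushout (t ∘ₗ a j) (f j), inferInstance, inferInstance,
      LinearPushout.inl _ _ ∘ₗ t,
      Function.update (fun i => LinearPushout.inl _ _ ∘ₗ y i) j (LinearPushout.inr _ _),
      fun i hi => ?_, ht.pushout_inl hχ (hf j) _⟩
    rcases eq_or_ne i j with rfl | hij
    · rw [Function.update_self]
      exact (LinearPushout.condition _ _).symm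
    · rw [Function.update_of_ne hij, LinearMap.comp_assoc, LinearMap.comp_assoc,
        hy i (Finset.mem_of_mem_insert_of_ne hi hij)]

end RelativeInjectivity

section DirectedColimit

variable {A : Type*} [Ring A] {ι : Type*} [Preorder ι] {G : ι → Type*} [∀ i, AddCommGroup (G i)]
  [∀ i, Module A (G i)] {L : Type*} [AddCommGroup L] [Module A L]

/-- The cocone `g` exhibits `L` as the colimit of the directed system of modules `(G, f)`. -/
structure IsDirectedColimit (f : ∀ i j, i ≤ j → G i →ₗ[A] G j) (g : ∀ i, G i →ₗ[A] L) :
    Prop where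
  comp_eq : ∀ i j hij, g j ∘ₗ f i j hij = g i
  exists_eq : ∀ x, ∃ i y, g i y = x
  exists_map_eq_zero : ∀ i y, g i y = 0 → ∃ j hij, f i j hij y = 0

namespace IsDirectedColimit

variable {f : ∀ i j, i ≤ j → G i →ₗ[A] G j} {g : ∀ i, G i →ₗ[A] L} (hg : IsDirectedColimit f g)
  [DirectedSystem G fun i j h => f i j h] [IsDirectedOrder ι]
  {X : Type*} [AddCommGroup X] [Module A X]
include hg

theorem exists_le_ker {K : Submodule A X} (hK : K.FG) {i : ι} {a : X →ₗ[A] G i}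
    (h : K ≤ LinearMap.ker (g i ∘ₗ a)) : ∃ j hij, K ≤ LinearMap.ker (f i j hij ∘ₗ a) := by
  obtain ⟨S, rfl⟩ := hK
  choose k hik hk using fun s : S => hg.exists_map_eq_zero i (a s) (h (Submodule.subset_span s.2))
  have : Nonempty ι := ⟨i⟩
  obtain ⟨l, hl⟩ := Finite.exists_le k
  obtain ⟨j, hij, hlj⟩ := exists_ge_ge i l
  refine ⟨j, hij, Submodule.span_le.2 fun s hs => ?_⟩
  have hkj := DirectedSystem.map_map (f := fun i j h => f i j h) (hik ⟨s, hs⟩)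
    ((hl ⟨s, hs⟩).trans hlj) (a s)
  simp only [SetLike.mem_coe, LinearMap.mem_ker, LinearMap.comp_apply, ← hkj, hk, map_zero]

theorem exists_lift [Nonempty ι] [Module.FinitePresentation A X] (a : X →ₗ[A] L) :
    ∃ i, ∃ a' : X →ₗ[A] G i, g i ∘ₗ a' = a := by
  obtain ⟨n, π, hπ⟩ := Module.Finite.exists_fin' A X
  choose k y hy using fun j : Fin n => hg.exists_eq (a (π (Pi.single j 1)))
  obtain ⟨i, hi⟩ := Finite.exists_le k
  let h : (Fin n → A) →ₗ[A] G i := Fintype.linearCombination A fun j => f (k j) i (hi j) (y j)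
  have hh : g i ∘ₗ h = a ∘ₗ π := by
    ext j
    simpa [h, hy] using LinearMap.congr_fun (hg.comp_eq _ _ (hi j)) (y j)
  obtain ⟨m, him, hm⟩ := hg.exists_le_ker (Module.FinitePresentation.fg_ker π hπ)
    (hh.symm ▸ LinearMap.ker_le_ker_comp π a)
  obtain ⟨a', ha'⟩ := exists_comp_eq_of_ker_le_ker hπ hm
  refine ⟨m, a', LinearMap.cancel_right hπ |>.1 ?_⟩
  rw [LinearMap.comp_assoc, ha', ← LinearMap.comp_assoc, hg.comp_eq, hh]

theorem exists_comp_eq [Module.Finite A X] {i : ι} {a b : X →ₗ[A] G i}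
    (h : g i ∘ₗ a = g i ∘ₗ b) : ∃ j hij, f i j hij ∘ₗ a = f i j hij ∘ₗ b := by
  have hab : ⊤ ≤ LinearMap.ker (g i ∘ₗ (a - b)) := by
    rw [LinearMap.comp_sub, h, sub_self, LinearMap.ker_zero]
  obtain ⟨j, hij, hj⟩ := hg.exists_le_ker Module.Finite.fg_top hab
  refine ⟨j, hij, sub_eq_zero.1 ?_⟩
  rw [← LinearMap.comp_sub, ← LinearMap.ker_eq_top, top_le_iff.1 hj]

end IsDirectedColimit

instance directedSystem_factor {P : Type*} [AddCommGroup P] [Module A P]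
    (N : ι →o Submodule A P) :
    DirectedSystem (fun i => P ⧸ N i) fun _ _ hij => Submodule.factor (N.monotone hij) where
  map_self i x := by
    obtain ⟨x, rfl⟩ := Submodule.mkQ_surjective _ x
    simp
  map_map i j k _ _ x := by
    obtain ⟨x, rfl⟩ := Submodule.mkQ_surjective _ x
    simp

theorem isDirectedColimit_factor {P : Type*} [AddCommGroup P] [Module A P] [Nonempty ι]
    [IsDirectedOrder ι] (N : ι →o Submodule A P) :
    IsDirectedColimit (fun _ _ hij => Submodule.factor (N.monotone hij))
      fun i => Submodule.factor (le_iSup N i) where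
  comp_eq _ _ _ := by ext; simp
  exists_eq x := by
    obtain ⟨x, rfl⟩ := Submodule.mkQ_surjective _ x
    exact ⟨Classical.arbitrary ι, Submodule.Quotient.mk x, by simp⟩
  exists_map_eq_zero i y hy := by
    obtain ⟨y, rfl⟩ := Submodule.mkQ_surjective _ y
    obtain ⟨k, hk⟩ : ∃ k, y ∈ N k := by
      rw [← Submodule.mem_iSup_of_directed N N.monotone.directed_le]
      simpa using hy
    obtain ⟨j, hij, hkj⟩ := exists_ge_ge i k
    exact ⟨j, hij, by simpa using N.monotone hkj hk⟩

theorem isDirectedColimit_directLimit [DecidableEq ι] [Nonempty ι] [IsDirectedOrder ι]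
    (f : ∀ i j, i ≤ j → G i →ₗ[A] G j) [DirectedSystem G fun i j h => f i j h] :
    IsDirectedColimit f (Module.DirectLimit.of A ι G f) where
  comp_eq _ _ _ := LinearMap.ext fun _ => Module.DirectLimit.of_f
  exists_eq := Module.DirectLimit.exists_of
  exists_map_eq_zero _ _ := Module.DirectLimit.of.zero_exact

/-- The composite transition maps `G i → G (i + 1) → ⋯ → G j` of a sequence of modules. -/
def towerMap {G : ℕ → Type*} [∀ n, AddCommGroup (G n)] [∀ n, Module A (G n)]
    (s : ∀ n, G n →ₗ[A] G (n + 1)) (i j : ℕ) (hij : i ≤ j) : G i →ₗ[A] G j :=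
  Nat.leRec (motive := fun j _ => G i →ₗ[A] G j) LinearMap.id (fun k _ g => s k ∘ₗ g) hij

section Tower

variable {G : ℕ → Type*} [∀ n, AddCommGroup (G n)] [∀ n, Module A (G n)]
  (s : ∀ n, G n →ₗ[A] G (n + 1))

theorem towerMap_self (i : ℕ) : towerMap s i i le_rfl = LinearMap.id :=
  Nat.leRec_self _ _

theorem towerMap_succ {i j : ℕ} (hij : i ≤ j) :
    towerMap s i (j + 1) (Nat.le_succ_of_le hij) = s j ∘ₗ towerMap s i j hij :=
  Nat.leRec_succ _ _ _

instance directedSystem_towerMap : DirectedSystem G (fun _ _ hij => towerMap s _ _ hij) where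
  map_self i x := by rw [towerMap_self, LinearMap.id_apply]
  map_map k j i hij hjk x := by
    induction k, hjk using Nat.le_induction with
    | base => rw [towerMap_self, LinearMap.id_apply]
    | succ k hjk ih =>
      rw [towerMap_succ s hjk, towerMap_succ s (hij.trans hjk), LinearMap.comp_apply,
        LinearMap.comp_apply, ih]

end Tower

end DirectedColimit

section SmallObject

variable {A : Type} [Ring A] {χ : (X : Type) → [AddCommGroup X] → [Module A X] → ℕ}

theorem IsLocallyAdditive.of_isDirectedColimit {ι : Type} [Preorder ι] [IsDirectedOrder ι]
    {G : ι → Type} [∀ i, AddCommGroup (G i)] [∀ i, Module A (G i)] {L : Type} [AddCommGroup L]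
    [Module A L] {f : ∀ i j, i ≤ j → G i →ₗ[A] G j} {g : ∀ i, G i →ₗ[A] L}
    (hg : IsDirectedColimit f g) [DirectedSystem G fun i j h => f i j h]
    {X : Type} [AddCommGroup X] [Module A X] [Module.Finite A X] {i : ι} {u : X →ₗ[A] G i}
    (hu : ∀ j hij, IsLocallyAdditive χ (f i j hij ∘ₗ u)) : IsLocallyAdditive χ (g i ∘ₗ u) := by
  intro V _ _ _ v b hbv
  have : Nonempty ι := ⟨i⟩
  have hcomp {i j k} (hij : i ≤ j) (hjk : j ≤ k) : f j k hjk ∘ₗ f i j hij = f i k (hij.trans hjk) :=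
    LinearMap.ext fun x => DirectedSystem.map_map (f := fun i j h => f i j h) hij hjk x
  obtain ⟨k, b', rfl⟩ := hg.exists_lift b
  obtain ⟨j, hij, hkj⟩ := exists_ge_ge i k
  obtain ⟨m, hjm, hm⟩ := hg.exists_comp_eq (a := (f k j hkj ∘ₗ b') ∘ₗ v) (b := f i j hij ∘ₗ u) (by
    simp only [← LinearMap.comp_assoc, hg.comp_eq, hbv])
  refine hu m (hij.trans hjm) V ‹_› v (f k m (hkj.trans hjm) ∘ₗ b') ?_
  simpa only [← LinearMap.comp_assoc, hcomp] using hm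

theorem IsLocallyAdditive.exists_extend (hχ : IsSubadditive A χ) {J : Type} {X Y : J → Type}
    [∀ j, AddCommGroup (X j)] [∀ j, Module A (X j)] [∀ j, AddCommGroup (Y j)]
    [∀ j, Module A (Y j)] [∀ j, Module.FinitePresentation A (X j)]
    [∀ j, Module.FinitePresentation A (Y j)] {X₀ W : Type} [AddCommGroup X₀] [Module A X₀]
    [AddCommGroup W] [Module A W] [Module.FinitePresentation A X₀] {u : X₀ →ₗ[A] W}
    (hu : IsLocallyAdditive χ u) {f : ∀ j, X j →ₗ[A] Y j} (hf : ∀ j, AdditiveAt χ (f j))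
    (a : ∀ j, X j →ₗ[A] W) :
    ∃ (W' : Type) (_ : AddCommGroup W') (_ : Module A W') (t : W →ₗ[A] W'),
      IsLocallyAdditive χ (t ∘ₗ u) ∧ ∀ j, ∃ b : Y j →ₗ[A] W', b ∘ₗ f j = t ∘ₗ a j := by
  classical
  let r (j : J) := LinearMap.range ((a j).prod (-(DFinsupp.lsingle (R := A) j ∘ₗ f j)))
  let N : Finset J →o Submodule A (W × Π₀ j, Y j) :=
    ⟨fun F => ⨆ j ∈ F, r j, fun _ _ h => biSup_mono h⟩
  have hrN (j : J) : r j ≤ ⨆ F, N F :=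
    (le_biSup r (Finset.mem_singleton_self j)).trans (le_iSup N {j})
  have hfin (F : Finset J) : IsLocallyAdditive χ ((N F).mkQ ∘ₗ LinearMap.inl A _ _ ∘ₗ u) := by
    obtain ⟨W', _, _, t, y, hy, ht⟩ := hu.exists_extend_finset hχ hf a F
    have hN : N F ≤ LinearMap.ker (t.coprod (DFinsupp.lsum ℕ y)) := by
      refine iSup₂_le fun j hj => ?_
      rintro _ ⟨x, rfl⟩
      simpa [← sub_eq_add_neg, sub_eq_zero] using (LinearMap.congr_fun (hy j hj) x).symm
    refine IsLocallyAdditive.of_comp (t := (N F).liftQ _ hN) ?_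
    convert ht using 1
    ext x
    simp
  refine ⟨_ ⧸ ⨆ F, N F, inferInstance, inferInstance,
    (⨆ F, N F).mkQ ∘ₗ LinearMap.inl A _ _, ?_, fun j => ?_⟩
  · exact IsLocallyAdditive.of_isDirectedColimit (isDirectedColimit_factor N)
      (i := ∅) (u := (N ∅).mkQ ∘ₗ LinearMap.inl A _ _ ∘ₗ u) fun F _ => hfin F
  · refine ⟨(⨆ F, N F).mkQ ∘ₗ LinearMap.inr A _ _ ∘ₗ DFinsupp.lsingle j, ?_⟩
    ext x
    refine ((Submodule.Quotient.eq _).2 (hrN j ⟨x, ?_⟩)).symm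
    ext1 <;> simp

/-- A finite presentation `Aⁿ / R` of a module. Up to isomorphism these are all finitely
presented modules, but unlike the latter they form a set in the lowest universe. -/
structure FPModel (A : Type) [Ring A] where
  rank : ℕ
  relations : Submodule A (Fin rank → A)
  fg : relations.FG

/-- The module presented by `P`. -/
abbrev FPModel.Carrier (P : FPModel A) : Type := (Fin P.rank → A) ⧸ P.relations

instance (P : FPModel A) : Module.FinitePresentation A P.Carrier :=
  finitePresentation_quotient P.fg

theorem exists_fpModel_equiv (X : Type) [AddCommGroup X] [Module A X]
    [Module.FinitePresentation A X] : ∃ P : FPModel A, Nonempty (X ≃ₗ[A] P.Carrier) := by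
  obtain ⟨n, R, e, hR⟩ := Module.FinitePresentation.exists_fin A X
  exact ⟨⟨n, R, hR⟩, ⟨e⟩⟩

/-- A locally additive map out of `X`, bundled with its codomain. -/
structure LocallyAdditiveMap (χ : (X : Type) → [AddCommGroup X] → [Module A X] → ℕ)
    (X : Type) [AddCommGroup X] [Module A X] where
  codomain : ModuleCat.{0} A
  map : X →ₗ[A] codomain
  isLocallyAdditive : IsLocallyAdditive χ map

theorem LocallyAdditiveMap.exists_next (hχ : IsSubadditive A χ) {X₀ : Type} [AddCommGroup X₀]
    [Module A X₀] [Module.FinitePresentation A X₀] (S : LocallyAdditiveMap χ X₀) :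
    ∃ (S' : LocallyAdditiveMap χ X₀) (t : S.codomain →ₗ[A] S'.codomain), t ∘ₗ S.map = S'.map ∧
      ∀ (X Y : Type) [AddCommGroup X] [Module A X] [AddCommGroup Y] [Module A Y],
        Module.FinitePresentation A X → Module.FinitePresentation A Y →
        ∀ f : X →ₗ[A] Y, AdditiveAt χ f → ∀ a : X →ₗ[A] S.codomain,
          ∃ b : Y →ₗ[A] S'.codomain, b ∘ₗ f = t ∘ₗ a := by
  let J := Σ (P Q : FPModel A),
    {f : P.Carrier →ₗ[A] Q.Carrier // AdditiveAt χ f} × (P.Carrier →ₗ[A] S.codomain)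
  obtain ⟨W', _, _, t, ht, hext⟩ := S.isLocallyAdditive.exists_extend hχ (J := J)
    (X := fun j => j.1.Carrier) (Y := fun j => j.2.1.Carrier) (f := fun j => j.2.2.1.1)
    (fun j => j.2.2.1.2) fun j => j.2.2.2
  refine ⟨⟨ModuleCat.of A W', t ∘ₗ S.map, ht⟩, t, rfl, fun X Y _ _ _ _ _ _ f hf a => ?_⟩
  obtain ⟨P, ⟨eX⟩⟩ := exists_fpModel_equiv (A := A) X
  obtain ⟨Q, ⟨eY⟩⟩ := exists_fpModel_equiv (A := A) Y
  have hf' : AdditiveAt χ (eY.toLinearMap ∘ₗ f ∘ₗ eX.symm.toLinearMap) :=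
    hχ.additiveAt_comp (hχ.additiveAt_comp (hχ.additiveAt_equiv eX.symm) hf)
      (hχ.additiveAt_equiv eY)
  obtain ⟨b, hb⟩ := hext ⟨P, Q, ⟨_, hf'⟩, a ∘ₗ eX.symm.toLinearMap⟩
  refine ⟨b ∘ₗ eY.toLinearMap, LinearMap.ext fun x => ?_⟩
  simpa using LinearMap.congr_fun hb (eX x)

theorem exists_isAdditiveInjective (hχ : IsSubadditive A χ) (X : Type) [AddCommGroup X]
    [Module A X] [Module.FinitePresentation A X] :
    ∃ (M : Type) (_ : AddCommGroup M) (_ : Module A M) (u : X →ₗ[A] M),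
      IsLocallyAdditive χ u ∧ IsAdditiveInjective χ M := by
  choose next t ht hext using LocallyAdditiveMap.exists_next (X₀ := X) hχ
  let S : ℕ → LocallyAdditiveMap χ X :=
    Nat.rec ⟨ModuleCat.of A X, LinearMap.id, isLocallyAdditive_id hχ⟩ fun _ => next
  let s (n : ℕ) : (S n).codomain →ₗ[A] (S (n + 1)).codomain := t (S n)
  have hcolim := isDirectedColimit_directLimit (towerMap s)
  refine ⟨_, inferInstance, inferInstance, Module.DirectLimit.of A ℕ _ (towerMap s) 0 ∘ₗ (S 0).map,
    IsLocallyAdditive.of_isDirectedColimit hcolim fun n _ => ?_, ?_⟩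
  · have hmap : towerMap s 0 n n.zero_le ∘ₗ (S 0).map = (S n).map := by
      induction n with
      | zero => rw [towerMap_self, LinearMap.id_comp]
      | succ n ih => rw [towerMap_succ s n.zero_le, LinearMap.comp_assoc, ih n.zero_le]; exact ht _
    exact hmap ▸ (S n).isLocallyAdditive
  · intro Y Z _ _ _ _ hY hZ f hf a
    obtain ⟨n, a, rfl⟩ := hcolim.exists_lift a
    obtain ⟨b, hb⟩ := hext (S n) Y Z hY hZ f hf a
    have hs : towerMap s n (n + 1) n.le_succ = s n := by
      rw [towerMap_succ s le_rfl, towerMap_self, LinearMap.comp_id]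
    refine ⟨Module.DirectLimit.of A ℕ _ (towerMap s) (n + 1) ∘ₗ b, ?_⟩
    rw [LinearMap.comp_assoc, hb, ← hcolim.comp_eq n (n + 1) n.le_succ, hs]
    rfl

theorem exists_isAdditiveInjective_reflecting (hχ : IsSubadditive A χ) :
    ∃ (M : Type) (_ : AddCommGroup M) (_ : Module A M), IsAdditiveInjective χ M ∧
      ∀ (X Y : Type) [AddCommGroup X] [Module A X] [AddCommGroup Y] [Module A Y],
        Module.FinitePresentation A X → Module.FinitePresentation A Y →
        ∀ f : X →ₗ[A] Y, ExtendsAlong M f → AdditiveAt χ f := by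
  choose M _ _ u hu hM using fun P : FPModel A => exists_isAdditiveInjective hχ P.Carrier
  refine ⟨∀ P, M P, inferInstance, inferInstance, fun X Y _ _ _ _ hX hY f hf a => ?_,
    fun X Y _ _ _ _ _ hY f hf => ?_⟩
  · choose b hb using fun P => hM P X Y hX hY f hf (LinearMap.proj P ∘ₗ a)
    exact ⟨LinearMap.pi b, by ext x P; exact LinearMap.congr_fun (hb P) x⟩
  · classical
    obtain ⟨P, ⟨e⟩⟩ := exists_fpModel_equiv (A := A) X
    obtain ⟨b, hb⟩ := hf (LinearMap.single A M P ∘ₗ u P ∘ₗ e.toLinearMap)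
    have hfe : AdditiveAt χ (f ∘ₗ e.symm.toLinearMap) :=
      hu P Y hY _ (LinearMap.proj P ∘ₗ b) <| LinearMap.ext fun x => by
        simpa using congr($(LinearMap.congr_fun hb (e.symm x)) P)
    simpa [LinearMap.comp_assoc] using hχ.additiveAt_comp (hχ.additiveAt_equiv e) hfe

end SmallObject

section PPDefinable

universe u v w

variable (A : Type u) [Ring A] (M : Type v) [AddCommGroup M] [Module A M]

/-- The pp-definable subgroup `{c y | c : Y → M}` of `M`, as a submodule over the endomorphism
ring. For `Y` generated by `y₁, …, yₙ` subject to finitely many relations and `y = ∑ aᵢ yᵢ`, it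
consists of the elements `∑ aᵢ mᵢ` where `(m₁, …, mₙ)` solves those relations in `M`. -/
def ppSubmodule {Y : Type*} [AddCommGroup Y] [Module A Y] (y : Y) :
    Submodule (Module.End A M) M :=
  LinearMap.range (LinearMap.applyₗ' (Module.End A M) y : (Y →ₗ[A] M) →ₗ[Module.End A M] M)

variable {M}

/-- A subgroup of `M` is pp-definable if it is the pp-definable subgroup attached to an element
of some finitely presented module. -/
def IsPPDefinable (P : Submodule (Module.End A M) M) : Prop :=
  ∃ (Y : Type u) (_ : AddCommGroup Y) (_ : Module A Y) (y : Y),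
    Module.FinitePresentation A Y ∧ ppSubmodule A M y = P

variable {A}

theorem isPPDefinable_ppSubmodule {Y : Type u} [AddCommGroup Y] [Module A Y]
    [hY : Module.FinitePresentation A Y] (y : Y) : IsPPDefinable A (ppSubmodule A M y) :=
  ⟨Y, _, _, y, hY, rfl⟩

section

variable {Y Y' : Type*} [AddCommGroup Y] [Module A Y] [AddCommGroup Y'] [Module A Y']

theorem mem_ppSubmodule_mkQ {K : Submodule A Y} {z : Y} {m : M} :
    m ∈ ppSubmodule A M (K.mkQ z) ↔ ∃ c : Y →ₗ[A] M, K ≤ LinearMap.ker c ∧ c z = m := by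
  constructor
  · rintro ⟨c, rfl⟩
    refine ⟨c ∘ₗ K.mkQ, ?_, rfl⟩
    simpa using LinearMap.ker_le_ker_comp K.mkQ c
  · rintro ⟨c, hc, rfl⟩
    exact ⟨K.liftQ c hc, rfl⟩

theorem ppSubmodule_map_le (h : Y →ₗ[A] Y') (y : Y) :
    ppSubmodule A M (h y) ≤ ppSubmodule A M y := by
  rintro _ ⟨c, rfl⟩
  exact ⟨c ∘ₗ h, rfl⟩

/-- The pushout of two modules with marked points, identifying the marked points. -/
abbrev PointedPushout (A : Type*) [Ring A] {Y Y' : Type*} [AddCommGroup Y] [Module A Y]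
    [AddCommGroup Y'] [Module A Y'] (y : Y) (y' : Y') : Type _ :=
  LinearPushout (LinearMap.toSpanSingleton A Y y) (LinearMap.toSpanSingleton A Y' y')

namespace PointedPushout

variable (A)

/-- The coprojection of the first module to the pushout. -/
def inl (y : Y) (y' : Y') : Y →ₗ[A] PointedPushout A y y' := LinearPushout.inl _ _

/-- The coprojection of the second module to the pushout. -/
def inr (y : Y) (y' : Y') : Y' →ₗ[A] PointedPushout A y y' := LinearPushout.inr _ _

variable {A}

theorem inl_eq_inr (y : Y) (y' : Y') : inl A y y' y = inr A y y' y' := by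
  simpa [inl, inr] using LinearMap.congr_fun (LinearPushout.condition
    (LinearMap.toSpanSingleton A Y y) (LinearMap.toSpanSingleton A Y' y')) 1

theorem exists_desc {Z : Type*} [AddCommGroup Z] [Module A Z] {y : Y} {y' : Y'}
    {p : Y →ₗ[A] Z} {q : Y' →ₗ[A] Z} (h : p y = q y') :
    ∃ d : PointedPushout A y y' →ₗ[A] Z, d ∘ₗ inl A y y' = p ∧ d ∘ₗ inr A y y' = q :=
  LinearPushout.exists_desc (by ext; simpa using h)

end PointedPushout

theorem ppSubmodule_pointedPushout (y : Y) (y' : Y') :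
    ppSubmodule A M (PointedPushout.inl A y y' y) = ppSubmodule A M y ⊓ ppSubmodule A M y' := by
  apply le_antisymm
  · refine le_inf (ppSubmodule_map_le _ y) ?_
    rw [PointedPushout.inl_eq_inr]
    exact ppSubmodule_map_le _ y'
  · rintro m ⟨⟨c, rfl⟩, c', hc'⟩
    obtain ⟨d, hd, -⟩ := PointedPushout.exists_desc (p := c) (q := c') hc'.symm
    exact ⟨d, LinearMap.congr_fun hd y⟩

theorem ppSubmodule_prodMk (y : Y) (y' : Y') :
    ppSubmodule A M (y, y') = ppSubmodule A M y ⊔ ppSubmodule A M y' := by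
  ext m
  rw [Submodule.mem_sup]
  constructor
  · rintro ⟨c, rfl⟩
    refine ⟨_, ⟨c ∘ₗ LinearMap.inl A Y Y', rfl⟩, _, ⟨c ∘ₗ LinearMap.inr A Y Y', rfl⟩, ?_⟩
    change c (y, 0) + c (0, y') = c (y, y')
    rw [← map_add]
    simp
  · rintro ⟨_, ⟨c, rfl⟩, _, ⟨c', rfl⟩, rfl⟩
    exact ⟨c.coprod c', LinearMap.coprod_apply c c' (y, y')⟩

end

theorem isPPDefinable_bot : IsPPDefinable A (⊥ : Submodule (Module.End A M) M) := by
  refine ⟨A, _, _, 0, inferInstance, eq_bot_iff.2 ?_⟩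
  rintro _ ⟨c, rfl⟩
  exact map_zero c

theorem isPPDefinable_top : IsPPDefinable A (⊤ : Submodule (Module.End A M) M) :=
  ⟨A, _, _, 1, inferInstance, eq_top_iff.2 fun m _ =>
    ⟨LinearMap.toSpanSingleton A M m, by simp⟩⟩

theorem IsPPDefinable.inf {P Q : Submodule (Module.End A M) M} (hP : IsPPDefinable A P)
    (hQ : IsPPDefinable A Q) : IsPPDefinable A (P ⊓ Q) := by
  obtain ⟨Y, _, _, y, _, rfl⟩ := hP
  obtain ⟨Y', _, _, y', _, rfl⟩ := hQ
  exact ⟨_, _, _, PointedPushout.inl A y y' y, inferInstance, ppSubmodule_pointedPushout y y'⟩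

theorem IsPPDefinable.sup {P Q : Submodule (Module.End A M) M} (hP : IsPPDefinable A P)
    (hQ : IsPPDefinable A Q) : IsPPDefinable A (P ⊔ Q) := by
  obtain ⟨Y, _, _, y, _, rfl⟩ := hP
  obtain ⟨Y', _, _, y', _, rfl⟩ := hQ
  exact ⟨_, _, _, (y, y'), inferInstance, ppSubmodule_prodMk y y'⟩

end PPDefinable

section PartialMaps

universe u v w

variable {A : Type u} [Ring A] {M : Type v} [AddCommGroup M] [Module A M] {W : Type w}
  [AddCommGroup W] [Module A W]

variable (A) in
/-- A submodule `G ≤ W × M`, seen as a linear relation, is finitely solvable if every finite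
subsystem of the equations `f w = m`, `(w, m) ∈ G`, can be solved by a map `f` into `M` once it is
pulled back along a map `b : Y → W` from a finitely presented module. -/
def IsFinitelySolvable (G : Submodule A (W × M)) : Prop :=
  ∀ (Y : Type u) [AddCommGroup Y] [Module A Y], Module.FinitePresentation A Y →
    ∀ (b : Y →ₗ[A] W) (K : Submodule A (Y × M)), K.FG →
      K ≤ G.comap (b.prodMap LinearMap.id) → ∃ c : Y →ₗ[A] M, K ≤ c.graph

/-- The element `n` can serve as the value at `w` in all finite systems of equations that come
from `G`, as in `IsFinitelySolvable`. -/
def IsAdmissibleValue (G : Submodule A (W × M)) (w : W) (n : M) : Prop :=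
  ∀ (Y : Type u) [AddCommGroup Y] [Module A Y], Module.FinitePresentation A Y →
    ∀ (b : Y →ₗ[A] W) (K : Submodule A (Y × M)), K.FG →
      K ≤ G.comap (b.prodMap LinearMap.id) → ∀ z, b z = w →
        ∃ c : Y →ₗ[A] M, K ≤ c.graph ∧ c z = n

theorem IsFinitelySolvable.eq_zero {G : Submodule A (W × M)} (hG : IsFinitelySolvable A G)
    {m : M} (hm : (0, m) ∈ G) : m = 0 := by
  obtain ⟨c, hc⟩ := hG A inferInstance 0 (A ∙ (0, m)) (Submodule.fg_span_singleton _) <| by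
    rwa [Submodule.span_singleton_le_iff_mem, Submodule.mem_comap, LinearMap.prodMap_apply,
      LinearMap.zero_apply]
  exact Eq.trans (hc (Submodule.mem_span_singleton_self _)) (map_zero c)

theorem isFinitelySolvable_sSup {c : Set (Submodule A (W × M))} (hc : IsChain (· ≤ ·) c)
    (hne : c.Nonempty) (hG : ∀ G ∈ c, IsFinitelySolvable A G) :
    IsFinitelySolvable A (sSup c) := by
  intro Y _ _ hY b K hK hKb
  have hle : K.map (b.prodMap LinearMap.id) ≤ sSup c := Submodule.map_le_iff_le_comap.2 hKb
  obtain ⟨G, hGc, hKG⟩ := (CompleteLattice.isCompactElement_iff_le_of_directed_sSup_le _ _).1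
    ((Submodule.fg_iff_compact _).1 (hK.map _)) c hne hc.directedOn hle
  exact hG G hGc Y hY b K hK (Submodule.map_le_iff_le_comap.1 hKG)

theorem IsAdmissibleValue.isFinitelySolvable_sup {G : Submodule A (W × M)} {w : W} {n : M}
    (h : IsAdmissibleValue G w n) : IsFinitelySolvable A (G ⊔ A ∙ (w, n)) := by
  intro Y _ _ _ b K hK hKb
  let b' : Y × A →ₗ[A] W := b.coprod (LinearMap.toSpanSingleton A W w)
  let θ : (Y × A) × M →ₗ[A] Y × M :=
    (LinearMap.fst A Y A).prodMap LinearMap.id -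
      (LinearMap.inr A Y M ∘ₗ LinearMap.toSpanSingleton A M n) ∘ₗ
        LinearMap.snd A Y A ∘ₗ LinearMap.fst A (Y × A) M
  have hθ (y : Y) (a : A) (m : M) : θ ((y, a), m) = (y, m - a • n) := by simp [θ]
  have hKθ : K ≤ (G.comap (b'.prodMap LinearMap.id)).map θ := by
    rintro ⟨y, m⟩ hym
    obtain ⟨g, hg, _, hq, hgq⟩ := Submodule.mem_sup.1 (hKb hym)
    obtain ⟨a, rfl⟩ := Submodule.mem_span_singleton.1 hq
    refine ⟨((y, -a), m - a • n), ?_, by simp [hθ]⟩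
    have hgq : g = (b y - a • w, m - a • n) := by
      rw [eq_sub_of_add_eq hgq]
      rfl
    simpa [b', ← sub_eq_add_neg, hgq] using hg
  obtain ⟨N, hNG, hN, rfl⟩ := exists_fg_le_map_eq hK hKθ
  obtain ⟨c, hcN, hcn⟩ := h (Y × A) inferInstance b' N hN hNG (0, 1) (by simp [b'])
  refine ⟨c ∘ₗ LinearMap.inl A Y A, ?_⟩
  rintro _ ⟨⟨⟨y, a⟩, m⟩, hyam, rfl⟩
  have hm : m = c (y, a) := hcN hyam
  have hca : c (y, a) = c (y, 0) + a • n := by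
    rw [← hcn, ← map_smul, ← map_add]
    simp
  simp [hθ, hm, hca]

variable {Y V : Type*} [AddCommGroup Y] [Module A Y] [AddCommGroup V] [Module A V]

/-- The pp-definable subgroup of values at `z` of maps `Y → M` solving the homogeneous system
attached to `K`. If `K` is solvable, these are the differences of the possible values at `z`. -/
def valueDifferences (K : Submodule A (Y × M)) (z : Y) : Submodule (Module.End A M) M :=
  ppSubmodule A M ((K.map (LinearMap.fst A Y M)).mkQ z)

theorem isPPDefinable_valueDifferences {Y : Type u} [AddCommGroup Y] [Module A Y]
    [Module.FinitePresentation A Y] {K : Submodule A (Y × M)} (hK : K.FG) (z : Y) :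
    IsPPDefinable A (valueDifferences K z) :=
  have := finitePresentation_quotient (hK.map (LinearMap.fst A Y M))
  isPPDefinable_ppSubmodule _

theorem le_graph_iff_map_fst_le_ker_sub {K : Submodule A (Y × M)} {c c' : Y →ₗ[A] M}
    (hc : K ≤ c.graph) : K ≤ c'.graph ↔ K.map (LinearMap.fst A Y M) ≤ LinearMap.ker (c' - c) := by
  rw [Submodule.map_le_iff_le_comap]
  refine forall₂_congr fun p hp => ?_
  have hp : p.2 = c p.1 := hc hp
  change p.2 = c' p.1 ↔ c' p.1 - c p.1 = 0
  rw [hp, sub_eq_zero, eq_comm]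

theorem sub_mem_valueDifferences_iff {K : Submodule A (Y × M)} {c : Y →ₗ[A] M}
    (hc : K ≤ c.graph) {z : Y} {n : M} :
    n - c z ∈ valueDifferences K z ↔ ∃ c' : Y →ₗ[A] M, K ≤ c'.graph ∧ c' z = n := by
  rw [valueDifferences, mem_ppSubmodule_mkQ]
  constructor
  · rintro ⟨e, he, hez⟩
    exact ⟨e + c, (le_graph_iff_map_fst_le_ker_sub hc).2 (by rwa [add_sub_cancel_right]),
      by simp [hez]⟩
  · rintro ⟨c', hc', rfl⟩
    exact ⟨c' - c, (le_graph_iff_map_fst_le_ker_sub hc).1 hc', rfl⟩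

theorem le_graph_comp_iff {K : Submodule A (Y × M)} {i : Y →ₗ[A] V} {c : V →ₗ[A] M} :
    K ≤ (c ∘ₗ i).graph ↔ K.map (i.prodMap LinearMap.id) ≤ c.graph := by
  rw [Submodule.map_le_iff_le_comap]
  rfl

theorem valueDifferences_le {K : Submodule A (Y × M)} {K' : Submodule A (V × M)} {i : Y →ₗ[A] V}
    (hK : K.map (i.prodMap LinearMap.id) ≤ K') (z : Y) :
    valueDifferences K' (i z) ≤ valueDifferences K z := by
  intro m hm
  obtain ⟨e, he, rfl⟩ := mem_ppSubmodule_mkQ.1 hm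
  refine mem_ppSubmodule_mkQ.2 ⟨e ∘ₗ i, ?_, rfl⟩
  rintro _ ⟨p, hp, rfl⟩
  exact he ⟨_, hK ⟨p, hp, rfl⟩, rfl⟩

/-- The union of the systems `K` and `K'` on the pushout, in which the unknowns at `y` and `y'`
are identified. -/
def gluedSystem {Y' : Type*} [AddCommGroup Y'] [Module A Y'] (K : Submodule A (Y × M))
    (K' : Submodule A (Y' × M)) (y : Y) (y' : Y') : Submodule A (PointedPushout A y y' × M) :=
  K.map ((PointedPushout.inl A y y').prodMap LinearMap.id) ⊔
    K'.map ((PointedPushout.inr A y y').prodMap LinearMap.id)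

theorem exists_gluedSystem_le_comap {Y' : Type*} [AddCommGroup Y'] [Module A Y']
    {G : Submodule A (W × M)} {b : Y →ₗ[A] W} {b' : Y' →ₗ[A] W} {K : Submodule A (Y × M)}
    {K' : Submodule A (Y' × M)} {y : Y} {y' : Y'} (hK : K ≤ G.comap (b.prodMap LinearMap.id))
    (hK' : K' ≤ G.comap (b'.prodMap LinearMap.id)) (h : b y = b' y') :
    ∃ d : PointedPushout A y y' →ₗ[A] W, d (PointedPushout.inl A y y' y) = b y ∧
      gluedSystem K K' y y' ≤ G.comap (d.prodMap LinearMap.id) := by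
  obtain ⟨d, rfl, rfl⟩ := PointedPushout.exists_desc h
  exact ⟨d, rfl, sup_le (Submodule.map_le_iff_le_comap.2 hK) (Submodule.map_le_iff_le_comap.2 hK')⟩

section DescendingChain

variable (hM : {P : Submodule (Module.End A M) M | IsPPDefinable A P}.IsWF)
include hM

theorem IsFinitelySolvable.exists_isAdmissibleValue {G : Submodule A (W × M)}
    (hG : IsFinitelySolvable A G) (w : W) : ∃ n, IsAdmissibleValue G w n := by
  -- Take a system for which the coset of possible values at `w` has a minimal subgroup of
  -- differences: imposing further equations does not shrink this coset any more.
  let S : Set (Submodule (Module.End A M) M) :=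
    {P | ∃ (Y : Type u) (_ : AddCommGroup Y) (_ : Module A Y) (b : Y →ₗ[A] W)
      (K : Submodule A (Y × M)) (z : Y), Module.FinitePresentation A Y ∧ K.FG ∧
        K ≤ G.comap (b.prodMap LinearMap.id) ∧ b z = w ∧ valueDifferences K z = P}
  have hS : S.IsWF := hM.mono <| by
    rintro _ ⟨Y, _, _, b, K, z, _, hK, -, -, rfl⟩
    exact isPPDefinable_valueDifferences hK z
  have hne : S.Nonempty := ⟨_, A, _, _, LinearMap.toSpanSingleton A W w, ⊥, 1, inferInstance,
    Submodule.fg_bot, bot_le, by simp, rfl⟩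
  obtain ⟨Y₀, _, _, b₀, K₀, z₀, hY₀, hK₀, hK₀b, hz₀, hmin⟩ := hS.min_mem hne
  obtain ⟨c₀, hc₀⟩ := hG Y₀ hY₀ b₀ K₀ hK₀ hK₀b
  refine ⟨c₀ z₀, fun Y _ _ _ b K hK hKb z hz => ?_⟩
  obtain ⟨b', hb', hb'K⟩ := exists_gluedSystem_le_comap hK₀b hKb (hz₀.trans hz.symm)
  have hfg : (gluedSystem K₀ K z₀ z).FG := (hK₀.map _).sup (hK.map _)
  have heq : valueDifferences (gluedSystem K₀ K z₀ z) (PointedPushout.inl A z₀ z z₀) =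
      valueDifferences K₀ z₀ :=
    (valueDifferences_le le_sup_left z₀).eq_of_not_lt fun hlt => hS.not_lt_min hne
      ⟨_, _, _, b', _, _, inferInstance, hfg, hb'K, hb'.trans hz₀, rfl⟩ (hmin ▸ hlt)
  obtain ⟨d, hd⟩ := hG _ inferInstance b' _ hfg hb'K
  obtain ⟨c, hc, hcz⟩ : ∃ c : PointedPushout A z₀ z →ₗ[A] M,
      gluedSystem K₀ K z₀ z ≤ c.graph ∧ c (PointedPushout.inl A z₀ z z₀) = c₀ z₀ := by
    have hd₀ : K₀ ≤ (d ∘ₗ PointedPushout.inl A z₀ z).graph :=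
      le_graph_comp_iff.2 (le_sup_left.trans hd)
    rw [← sub_mem_valueDifferences_iff hd, heq]
    exact (sub_mem_valueDifferences_iff hd₀).2 ⟨c₀, hc₀, rfl⟩
  exact ⟨c ∘ₗ PointedPushout.inr A z₀ z, le_graph_comp_iff.2 (le_sup_right.trans hc), by
    rw [← hcz, PointedPushout.inl_eq_inr, LinearMap.comp_apply]⟩

theorem IsFinitelySolvable.exists_le_graph {G : Submodule A (W × M)}
    (hG : IsFinitelySolvable A G) : ∃ f : W →ₗ[A] M, G ≤ f.graph := by
  obtain ⟨H, hGH, hH⟩ := zorn_le_nonempty₀ {H | IsFinitelySolvable A H}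
    (fun c hc hchain H hHc => ⟨sSup c, isFinitelySolvable_sSup hchain ⟨H, hHc⟩ hc,
      fun _ => le_sSup⟩) G hG
  have htotal (w : W) : ∃ n, (w, n) ∈ H := by
    obtain ⟨n, hn⟩ := hH.prop.exists_isAdmissibleValue hM w
    exact ⟨n, hH.le_of_ge hn.isFinitelySolvable_sup le_sup_left
      (Submodule.mem_sup_right (Submodule.mem_span_singleton_self _))⟩
  obtain ⟨f, rfl⟩ : ∃ f : W →ₗ[A] M, H = f.graph := by
    apply Submodule.exists_eq_graph
    refine ⟨(injective_iff_map_eq_zero (LinearMap.fst A W M ∘ₗ H.subtype)).2 ?_, fun w => ?_⟩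
    · rintro ⟨⟨w, m⟩, hwm⟩ (rfl : w = 0)
      simpa using hH.prop.eq_zero hwm
    · obtain ⟨n, hn⟩ := htotal w
      exact ⟨⟨(w, n), hn⟩, rfl⟩
  exact ⟨f, hGH⟩

theorem exists_apply_eq_of_forall_mem_ppSubmodule {w : W} {n : M}
    (h : ∀ (Y : Type u) [AddCommGroup Y] [Module A Y], Module.FinitePresentation A Y →
      ∀ (b : Y →ₗ[A] W) (y : Y), b y = w → n ∈ ppSubmodule A M y) :
    ∃ f : W →ₗ[A] M, f w = n := by
  have hn : IsAdmissibleValue (⊥ : Submodule A (W × M)) w n := by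
    intro Y _ _ _ b K hK hKb z hz
    have hKb : ∀ p ∈ K, b p.1 = 0 ∧ p.2 = 0 := fun p hp => by simpa using hKb hp
    have hle : K.map (LinearMap.fst A Y M) ≤ LinearMap.ker b :=
      Submodule.map_le_iff_le_comap.2 fun p hp => (hKb p hp).1
    have := finitePresentation_quotient (hK.map (LinearMap.fst A Y M))
    obtain ⟨c, hc, hcz⟩ := mem_ppSubmodule_mkQ.1 (h _ this (Submodule.liftQ _ b hle) _ hz)
    exact ⟨c, fun p hp => (hKb p hp).2.trans (hc ⟨p, hp, rfl⟩).symm, hcz⟩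
  obtain ⟨f, hf⟩ := hn.isFinitelySolvable_sup.exists_le_graph hM
  have hwn : n = f w := hf (Submodule.mem_sup_right (Submodule.mem_span_singleton_self _))
  exact ⟨f, hwn.symm⟩

end DescendingChain

end PartialMaps

section Endofinite

universe u v

variable {A : Type u} [Ring A] {M : Type v} [AddCommGroup M] [Module A M]
  (hdcc : {P : Submodule (Module.End A M) M | IsPPDefinable A P}.IsWF)
include hdcc

theorem exists_least_isPPDefinable (m : M) :
    ∃ P, IsLeast {P : Submodule (Module.End A M) M | IsPPDefinable A P ∧ m ∈ P} P := by
  obtain ⟨P, ⟨hP, hmP⟩, hmin⟩ :=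
    (hdcc.mono fun _ h => h.1 : {P | IsPPDefinable A P ∧ m ∈ P}.IsWF).exists_minimal
      ⟨⊤, isPPDefinable_top, Submodule.mem_top⟩
  exact ⟨P, ⟨hP, hmP⟩, fun Q hQ =>
    (hmin ⟨hP.inf hQ.1, hmP, hQ.2⟩ inf_le_left).trans inf_le_right⟩

theorem isPPDefinable_span_singleton (m : M) : IsPPDefinable A (Module.End A M ∙ m) := by
  obtain ⟨P, ⟨hP, hmP⟩, hleast⟩ := exists_least_isPPDefinable hdcc m
  suffices P = Module.End A M ∙ m from this ▸ hP
  refine le_antisymm (fun n hn => ?_) ((Submodule.span_singleton_le_iff_mem _ _).2 hmP)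
  obtain ⟨f, rfl⟩ := exists_apply_eq_of_forall_mem_ppSubmodule hdcc fun Y _ _ _ b y hby =>
    hleast ⟨isPPDefinable_ppSubmodule y, b, hby⟩ hn
  exact Submodule.mem_span_singleton.2 ⟨f, rfl⟩

variable (hacc : {P : Submodule (Module.End A M) M | IsPPDefinable A P}.WellFoundedOn (· > ·))
include hacc

theorem isPPDefinable_of_isWF (U : Submodule (Module.End A M) M) : IsPPDefinable A U := by
  obtain ⟨P, ⟨hP, hPU⟩, hmax⟩ :=
    (hacc.subset fun _ h => h.1 : {P | IsPPDefinable A P ∧ P ≤ U}.WellFoundedOn _).exists_maximal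
      ⟨⊥, isPPDefinable_bot, bot_le⟩
  suffices P = U from this ▸ hP
  refine le_antisymm hPU fun m hm => ?_
  have hsup : P ⊔ Module.End A M ∙ m ≤ P := hmax
    ⟨hP.sup (isPPDefinable_span_singleton hdcc m),
      sup_le hPU ((Submodule.span_singleton_le_iff_mem _ _).2 hm)⟩ le_sup_left
  exact hsup (Submodule.mem_sup_right (Submodule.mem_span_singleton_self m))

theorem isFiniteLength_end_of_isWF : IsFiniteLength (Module.End A M) M := by
  have huniv : {P : Submodule (Module.End A M) M | IsPPDefinable A P} = Set.univ :=
    Set.eq_univ_of_forall (isPPDefinable_of_isWF hdcc hacc)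
  rw [huniv] at hdcc hacc
  exact isFiniteLength_iff_isNoetherian_isArtinian.2
    ⟨isNoetherian_iff'.2 ⟨Set.wellFoundedOn_univ.1 hacc⟩, Set.isWF_univ_iff.1 hdcc⟩

end Endofinite

section Rank

variable {A : Type} [Ring A] (χ : (X : Type) → [AddCommGroup X] → [Module A X] → ℕ)

/-- The rank of the map `A → Y` taking `1` to `y`. -/
def pointRank {Y : Type} [AddCommGroup Y] [Module A Y] (y : Y) : ℕ :=
  chiRank χ (LinearMap.toSpanSingleton A Y y)

/-- The rank of a pp-definable subgroup: the least rank of a point of a finitely presented module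
that defines it. Subgroups that are not pp-definable get the junk value `0`. -/
noncomputable def ppRank {M : Type} [AddCommGroup M] [Module A M]
    (P : Submodule (Module.End A M) M) : ℕ :=
  sInf {r | ∃ (Y : Type) (_ : AddCommGroup Y) (_ : Module A Y) (y : Y),
    Module.FinitePresentation A Y ∧ ppSubmodule A M y = P ∧ pointRank χ y = r}

variable {χ} {M : Type} [AddCommGroup M] [Module A M]

theorem ppRank_ppSubmodule_le {Y : Type} [AddCommGroup Y] [Module A Y]
    [hY : Module.FinitePresentation A Y] (y : Y) :
    ppRank χ (ppSubmodule A M y) ≤ pointRank χ y :=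
  Nat.sInf_le ⟨Y, _, _, y, hY, rfl, rfl⟩

theorem IsPPDefinable.exists_pointRank_eq {P : Submodule (Module.End A M) M}
    (hP : IsPPDefinable A P) :
    ∃ (Y : Type) (_ : AddCommGroup Y) (_ : Module A Y) (y : Y),
      Module.FinitePresentation A Y ∧ ppSubmodule A M y = P ∧ pointRank χ y = ppRank χ P := by
  obtain ⟨Y, _, _, y, hY, hy⟩ := hP
  exact Nat.sInf_mem (s := {r | ∃ (Y : Type) (_ : AddCommGroup Y) (_ : Module A Y) (y : Y),
    Module.FinitePresentation A Y ∧ ppSubmodule A M y = P ∧ pointRank χ y = r})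
    ⟨_, Y, _, _, y, hY, hy, rfl⟩

variable (hχ : IsSubadditive A χ)
include hχ

theorem IsPPDefinable.ppRank_le {P : Submodule (Module.End A M) M} (hP : IsPPDefinable A P) :
    ppRank χ P ≤ χ A := by
  obtain ⟨Y, _, _, y, _, rfl⟩ := hP
  exact (ppRank_ppSubmodule_le y).trans (hχ.chiRank_le _)

/-- If `h` preserves the rank of `y`, then `χ` is additive along `Y → Y' × Y/Ay`, so every map
`k : Y → M` extends to the right-hand side, where `y` becomes `(h y, 0)`. -/
theorem IsAdditiveInjective.ppSubmodule_le_of_pointRank_le (hM : IsAdditiveInjective χ M)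
    {Y Y' : Type} [AddCommGroup Y] [Module A Y] [AddCommGroup Y'] [Module A Y']
    [Module.FinitePresentation A Y] [Module.FinitePresentation A Y'] {h : Y →ₗ[A] Y'} {y : Y}
    (hy : pointRank χ y ≤ pointRank χ (h y)) : ppSubmodule A M y ≤ ppSubmodule A M (h y) := by
  have hadd := hχ.additiveAt_prod_mkQ_of_chiRank_le
    (f := LinearMap.toSpanSingleton A Y y) (g := h)
    (by rwa [LinearMap.comp_toSpanSingleton])
  rintro _ ⟨k, rfl⟩
  obtain ⟨l, hl⟩ := hM _ _ inferInstance inferInstance _ hadd k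
  refine ⟨l ∘ₗ LinearMap.inl A _ _, ?_⟩
  have hy0 : (LinearMap.range (LinearMap.toSpanSingleton A Y y)).mkQ y = 0 :=
    (Submodule.Quotient.mk_eq_zero _).2 ⟨1, by simp⟩
  simpa [hy0] using LinearMap.congr_fun hl y

theorem IsAdditiveInjective.strictMonoOn_ppRank (hM : IsAdditiveInjective χ M) :
    StrictMonoOn (ppRank χ) {P : Submodule (Module.End A M) M | IsPPDefinable A P} := by
  rintro _ ⟨Y', _, _, y', _, rfl⟩ Q hQ hlt
  obtain ⟨Y, _, _, y, _, rfl, hy⟩ := hQ.exists_pointRank_eq (χ := χ)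
  have hP : ppSubmodule A M (PointedPushout.inl A y y' y) = ppSubmodule A M y' := by
    rw [ppSubmodule_pointedPushout, inf_eq_right.2 hlt.le]
  rw [← hy, ← hP]
  refine (ppRank_ppSubmodule_le _).trans_lt (lt_of_not_ge fun hle => hlt.not_ge ?_)
  rw [← hP]
  exact hM.ppSubmodule_le_of_pointRank_le hχ hle

theorem IsAdditiveInjective.isEndofinite (hM : IsAdditiveInjective χ M) : IsEndofinite A M := by
  let S : Set (Submodule (Module.End A M) M) := {P | IsPPDefinable A P}
  have hmono : StrictMonoOn (ppRank χ) S := hM.strictMonoOn_ppRank hχ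
  have hanti : StrictAntiOn (fun P => χ A - ppRank χ P) S := fun P hP Q hQ hPQ =>
    Nat.sub_lt_sub_left ((hmono hP hQ hPQ).trans_le (IsPPDefinable.ppRank_le hχ hQ))
      (hmono hP hQ hPQ)
  exact isFiniteLength_end_of_isWF
    (Subrelation.wf (fun {P Q} h => hmono P.2 Q.2 h)
      (measure fun P : S => ppRank χ P.1).wf)
    (Subrelation.wf (fun {P Q} h => hanti Q.2 P.2 h)
      (measure fun P : S => χ A - ppRank χ P.1).wf)

end Rank

section Length

theorem compLength_eq_length {R M : Type} [Ring R] [AddCommGroup M] [Module R M]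
    (h : IsFiniteLength R M) : (compLength R M : ℕ∞) = Module.length R M := by
  have hs := isFiniteLength_iff_exists_compositionSeries.1 h
  rw [compLength, dif_pos hs]
  exact Module.length_compositionSeries _ hs.choose_spec.1 hs.choose_spec.2

variable {A M X Y Z : Type} [Ring A] [AddCommGroup M] [Module A M] [AddCommGroup X] [Module A X]
  [AddCommGroup Y] [Module A Y] [AddCommGroup Z] [Module A Z]

theorem IsEndofinite.isFiniteLength_linearMap (hM : IsEndofinite A M) [Module.Finite A X] :
    IsFiniteLength (Module.End A M) (X →ₗ[A] M) := by
  obtain ⟨n, s, hs⟩ := Module.Finite.exists_fin (R := A) (M := X)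
  obtain ⟨_, _⟩ := isFiniteLength_iff_isNoetherian_isArtinian.1 hM
  let eval : (X →ₗ[A] M) →ₗ[Module.End A M] (Fin n → M) :=
    LinearMap.pi fun i => LinearMap.applyₗ' (Module.End A M) (s i)
  have heval : Function.Injective eval := fun f g h =>
    LinearMap.ext_on_range hs fun i => congrFun h i
  exact isFiniteLength_iff_isNoetherian_isArtinian.2
    ⟨isNoetherian_of_injective eval heval, isArtinian_of_injective eval heval⟩

theorem IsEndofinite.chiMod_eq_length (hM : IsEndofinite A M) [Module.Finite A X] :
    (chiMod A M X : ℕ∞) = Module.length (Module.End A M) (X →ₗ[A] M) :=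
  compLength_eq_length hM.isFiniteLength_linearMap

theorem length_range_eq_iff_surjective {R V V' : Type*} [Ring R] [AddCommGroup V] [Module R V]
    [AddCommGroup V'] [Module R V'] (h : IsFiniteLength R V') (φ : V →ₗ[R] V') :
    Module.length R (LinearMap.range φ) = Module.length R V' ↔ Function.Surjective φ := by
  obtain ⟨_, _⟩ := isFiniteLength_iff_isNoetherian_isArtinian.1 h
  rw [← LinearMap.range_eq_top]
  constructor
  · intro heq
    by_contra hne
    exact (Submodule.length_lt hne).ne heq
  · intro htop
    rw [htop, Module.length_top]

theorem exact_lcomp_end {f : X →ₗ[A] Y} {g : Y →ₗ[A] Z} (hfg : Function.Exact f g)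
    (hg : Function.Surjective g) :
    Function.Exact (g.lcomp (Module.End A M) M) (f.lcomp (Module.End A M) M) := by
  intro b
  constructor
  · intro hb
    refine exists_comp_eq_of_ker_le_ker hg ?_
    rw [hfg.linearMap_ker_eq]
    exact LinearMap.range_le_ker_iff.2 hb
  · rintro ⟨c, rfl⟩
    rw [LinearMap.lcomp_apply', LinearMap.lcomp_apply', LinearMap.comp_assoc,
      hfg.linearMap_comp_eq_zero, LinearMap.comp_zero]

theorem IsEndofinite.chiMod_add_eq_iff (hM : IsEndofinite A M) [Module.Finite A X]
    [Module.Finite A Y] {f : X →ₗ[A] Y} {g : Y →ₗ[A] Z} (hfg : Function.Exact f g)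
    (hg : Function.Surjective g) :
    chiMod A M X + chiMod A M Z = chiMod A M Y ↔ ExtendsAlong M f := by
  have : Module.Finite A Z := Module.Finite.of_surjective g hg
  let φ := f.lcomp (Module.End A M) M
  have hexact : Function.Exact (g.lcomp (Module.End A M) M) φ.rangeRestrict := fun b => by
    rw [← exact_lcomp_end hfg hg b, Subtype.ext_iff]
    rfl
  have hlen := Module.length_eq_add_of_exact _ _ (LinearMap.lcomp_injective_of_surjective g hg)
    φ.surjective_rangeRestrict hexact
  rw [← hM.chiMod_eq_length, ← hM.chiMod_eq_length] at hlen
  calc chiMod A M X + chiMod A M Z = chiMod A M Y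
    _ ↔ Module.length (Module.End A M) (LinearMap.range φ) = chiMod A M X := by
      rw [← ENat.natCast_inj, Nat.cast_add, hlen, add_comm,
        (ENat.add_right_injective_of_ne_top (ENat.natCast_ne_top _)).eq_iff, eq_comm]
    _ ↔ Function.Surjective φ := by
      rw [hM.chiMod_eq_length, length_range_eq_iff_surjective hM.isFiniteLength_linearMap]
    _ ↔ ExtendsAlong M f := Iff.rfl

end Length

theorem memAdloc_congr {A : Type} [Ring A]
    {χ χ' : (X : Type) → [AddCommGroup X] → [Module A X] → ℕ} {Z : Type} [AddCommGroup Z]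
    [Module A Z]
    (h : ∀ (X Y : Type) [AddCommGroup X] [Module A X] [AddCommGroup Y] [Module A Y],
      Module.FinitePresentation A X → Module.FinitePresentation A Y →
      ∀ (f : X →ₗ[A] Y) (g : Y →ₗ[A] Z), Function.Exact f g → Function.Surjective g →
      (χ X + χ Z = χ Y ↔ χ' X + χ' Z = χ' Y)) :
    MemAdloc A χ Z ↔ MemAdloc A χ' Z := by
  refine and_congr_right fun _ => ?_
  refine forall₂_congr fun X Y => forall₄_congr fun _ _ _ _ => forall₂_congr fun hX hY =>
    forall₂_congr fun f g => forall_congr' fun _ => forall₂_congr fun hfg hg => ?_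
  exact h X Y hX hY f g hfg hg

theorem statement3_general (A : Type) [Ring A]
    (χ : (X : Type) → [AddCommGroup X] → [Module A X] → ℕ) (hχ : IsSubadditive A χ) :
    ∃ (M : Type) (_ : AddCommGroup M) (_ : Module A M),
      IsEndofinite A M ∧
      ∀ (Z : Type) [AddCommGroup Z] [Module A Z],
        MemAdloc A χ Z ↔ MemAdloc A (chiMod A M) Z := by
  obtain ⟨M, _, _, hM, hreflect⟩ := exists_isAdditiveInjective_reflecting hχ
  have hfin : IsEndofinite A M := hM.isEndofinite hχ
  refine ⟨M, _, _, hfin, fun Z _ _ => memAdloc_congr fun X Y _ _ _ _ hX hY f g hfg hg => ?_⟩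
  rw [hfin.chiMod_add_eq_iff hfg hg, ← hχ.additiveAt_iff_of_exact hfg hg]
  exact ⟨hM X Y hX hY f, hreflect X Y hX hY f⟩

/-- If the finitely presented `A`-modules form an abelian category, then for
every subadditive function `χ` there is an endofinite `A`-module `M` with
`Adloc(χ) = Adloc(χ_M)`. -/
theorem statement3 (A : Type) [Ring A] (hA : FpAbelian A)
    (χ : (X : Type) → [AddCommGroup X] → [Module A X] → ℕ) (hχ : IsSubadditive A χ) :
    ∃ (M : Type) (_ : AddCommGroup M) (_ : Module A M),
      IsEndofinite A M ∧
      ∀ (Z : Type) [AddCommGroup Z] [Module A Z],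
        MemAdloc A χ Z ↔ MemAdloc A (chiMod A M) Z :=
  statement3_general A χ hχ
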